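/- Let λ, μ ∈ ℝ with μ > 0, let ω > 0, R > 0, set k_s = ω/√μ, and let n ∈ ℕ. Let Q : ℝ² ∖ {0} → ℂ² be given by Q(x) = (2 n J_n(k_s‖x‖)/(k_s‖x‖)) w(x)^n ν(x) + 2 i J_n'(k_s‖x‖) w(x)^n t(x). Then for every x with ‖x‖ = R, the traction ∂_ν Q(x) = λ(∇·Q)(x) ν(x) + 2μ (∇^s Q)(x) ν(x) equals γ₁ w(x)^n ν(x) + γ₂ w(x)^n t(x), where γ₁ = (4 n μ/(k_s R²)) ( k_s R J_n'(k_s R) − J_n(k_s R) ) and γ₂ = (2 i μ/(k_s R²)) ( (2n² − k_s² R²) J_n(k_s R) − 2 k_s R J_n'(k_s R) ). -/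

import Mathlib

/-!
The field has the polar form `Q = (a(r) ν + b(r) t) e^{inθ}` with `a = 2 n J_n(k r) / (k r)` and
`b = 2 i J_n'(k r)`, where `k = k_s`. For any field of this form (`polar_strain`),
`∇·Q = (a' + a / r + i n b / r) e^{inθ}` and
`(∇ˢQ) ν = (a' ν + ½ (i n a / r + b' - b / r) t) e^{inθ}`. These follow from the product rule and
the gradients of a radial function, of `cos θ`, of `sin θ` and of `e^{inθ}`.

For the given `a` and `b` the divergence vanishes, so the `λ` term drops out. The radial component
`2 μ a'` is `γ₁`. The tangential component `μ (i n a / r + b' - b / r)` involves `J_n''(k r)`,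
and becomes `γ₂` after Bessel's equation `J'' = -J' / s - (1 - n² / s²) J`
(`besselJ_deriv_hasDerivAt`).

Bessel's equation is derived from the series by writing `J_n(s) = (s/2)^n E_n((s/2)^2)` with the
entire function `E_n(z) = ∑ (-z)^m / (m! (m+n)!)`. It satisfies `E_n' = -E_{n+1}` and
`E_n = (n+1) E_{n+1} - z E_{n+2}`, which give `J_n' = (n/s) J_n - J_{n+1}` and the three-term
recurrence for `J_n`.
-/

/-- Euclidean norm on `ℝ²` (represented as `ℝ × ℝ`). -/
noncomputable def r2 (x : ℝ × ℝ) : ℝ := Real.sqrt (x.1 ^ 2 + x.2 ^ 2)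

/-- `w(x) = (x₁ + i x₂)/|x| = e^{iθ_x}` on `ℝ² ∖ {0}`. -/
noncomputable def wc (x : ℝ × ℝ) : ℂ := ((x.1 : ℂ) + Complex.I * (x.2 : ℂ)) / (r2 x : ℂ)

/-- Bessel function of the first kind of (nonnegative integer) order `n`:
`J_n(s) = Σ_{m=0}^∞ (-1)^m/(m!(m+n)!) (s/2)^{2m+n}`. -/
noncomputable def besselJ (n : ℕ) (s : ℝ) : ℝ :=
  ∑' m : ℕ, ((-1 : ℝ) ^ m / ((m.factorial : ℝ) * ((m + n).factorial : ℝ))) *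
    (s / 2) ^ (2 * m + n)

/-- First partial derivative `∂₁u` of a scalar field on `ℝ²`. -/
noncomputable def pd1 (u : ℝ × ℝ → ℂ) (x : ℝ × ℝ) : ℂ := fderiv ℝ u x (1, 0)

/-- Second partial derivative `∂₂u` of a scalar field on `ℝ²`. -/
noncomputable def pd2 (u : ℝ × ℝ → ℂ) (x : ℝ × ℝ) : ℂ := fderiv ℝ u x (0, 1)

/-! ### Bessel functions -/

/-- The entire function `E_n(z) = ∑ (-z)^m / (m! (m+n)!)`, for which
`J_n(s) = (s/2)^n E_n((s/2)^2)`. -/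
noncomputable def besselE (n : ℕ) (z : ℝ) : ℝ :=
  ∑' m : ℕ, ((-1 : ℝ) ^ m / ((m.factorial : ℝ) * ((m + n).factorial : ℝ))) * z ^ m

lemma besselE_summable (n : ℕ) (z : ℝ) :
    Summable fun m : ℕ =>
      ((-1 : ℝ) ^ m / ((m.factorial : ℝ) * ((m + n).factorial : ℝ))) * z ^ m := by
  refine Summable.of_norm_bounded (Real.summable_pow_div_factorial |z|) fun m => ?_
  have h1 : (0 : ℝ) < m.factorial := by positivity
  have h2 : (1 : ℝ) ≤ ((m + n).factorial : ℝ) := by exact_mod_cast Nat.factorial_pos _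
  rw [norm_mul, norm_div, norm_pow, norm_pow, norm_neg, norm_one, one_pow, Real.norm_eq_abs z,
    Real.norm_of_nonneg (by positivity), div_mul_eq_mul_div, one_mul]
  gcongr
  nlinarith

/-- Termwise differentiation of the power series, on a ball `|y| < C = |z| + 1` where the
differentiated terms are dominated by `m C^(m-1) / m!`. -/
lemma besselE_hasDerivAt (n : ℕ) (z : ℝ) :
    HasDerivAt (besselE n) (-besselE (n + 1) z) z := by
  let g : ℕ → ℝ → ℝ := fun m z =>
    ((-1 : ℝ) ^ m / ((m.factorial : ℝ) * ((m + n).factorial : ℝ))) * z ^ m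
  let g' : ℕ → ℝ → ℝ := fun m z =>
    ((-1 : ℝ) ^ m / ((m.factorial : ℝ) * ((m + n).factorial : ℝ))) * (m * z ^ (m - 1))
  let C : ℝ := |z| + 1
  have hC : 0 < C := by positivity
  let u : ℕ → ℝ := fun m => m * C ^ (m - 1) / m.factorial
  have hu : Summable u := by
    rw [← summable_nat_add_iff 1]
    refine (Real.summable_pow_div_factorial C).congr fun m => ?_
    simp only [u, Nat.factorial_succ, Nat.add_sub_cancel]
    have : (m.factorial : ℝ) ≠ 0 := by positivity
    push_cast
    field_simp
  have hg : ∀ m y, y ∈ Metric.ball (0 : ℝ) C → HasDerivAt (g m) (g' m y) y := fun m y _ =>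
    (hasDerivAt_pow m y).const_mul _
  have hg' : ∀ m y, y ∈ Metric.ball (0 : ℝ) C → ‖g' m y‖ ≤ u m := by
    intro m y hy
    have hy' : |y| ≤ C := by
      have := (mem_ball_zero_iff.1 hy).le
      simpa using this
    have h1 : (0 : ℝ) < m.factorial := by positivity
    have h2 : (1 : ℝ) ≤ ((m + n).factorial : ℝ) := by exact_mod_cast Nat.factorial_pos _
    simp only [g', u]
    rw [norm_mul, norm_div, norm_pow, norm_neg, norm_one, one_pow,
      Real.norm_of_nonneg (by positivity : (0 : ℝ) ≤ m.factorial * (m + n).factorial),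
      norm_mul, norm_pow, Real.norm_eq_abs y,
      Real.norm_of_nonneg (by positivity : (0 : ℝ) ≤ (m : ℝ)), div_mul_eq_mul_div, one_mul]
    gcongr
    nlinarith
  have hz : z ∈ Metric.ball (0 : ℝ) C := by
    simp [C]
  have key := hasDerivAt_tsum_of_isPreconnected hu Metric.isOpen_ball
    (convex_ball (0 : ℝ) C).isPreconnected hg hg' (Metric.mem_ball_self hC)
    (besselE_summable n 0) hz
  have hs : Summable fun m => g' m z := Summable.of_norm_bounded hu fun m => hg' m z hz
  have hval : ∑' m, g' m z = -besselE (n + 1) z := by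
    rw [hs.tsum_eq_zero_add, besselE, ← tsum_neg]
    simp only [g', Nat.cast_zero, zero_mul, mul_zero, zero_add]
    refine tsum_congr fun m => ?_
    rw [show m + 1 + n = m + (n + 1) by ring, Nat.factorial_succ m, Nat.add_sub_cancel]
    have : (m.factorial : ℝ) ≠ 0 := by positivity
    have : ((m + (n + 1)).factorial : ℝ) ≠ 0 := by positivity
    push_cast
    field_simp
    ring
  rw [hval] at key
  exact key

/-- Three-term recurrence, obtained by writing `1/(m+n)! = (m+n+1)/(m+n+1)!` in each
coefficient. -/
lemma besselE_rec (n : ℕ) (z : ℝ) :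
    besselE n z = (n + 1) * besselE (n + 1) z - z * besselE (n + 2) z := by
  have h1 := (besselE_summable (n + 1) z).mul_left ((n : ℝ) + 1)
  have h0 := besselE_summable n z
  have hd := h0.sub h1
  have e : besselE n z - (n + 1) * besselE (n + 1) z = -(z * besselE (n + 2) z) := by
    unfold besselE
    rw [← tsum_mul_left, ← h0.tsum_sub h1, hd.tsum_eq_zero_add, ← tsum_mul_left, ← tsum_neg]
    have hz : ((-1 : ℝ) ^ 0 / (((0 : ℕ).factorial : ℝ) * ((0 + n).factorial : ℝ))) * z ^ 0 -
        ((n : ℝ) + 1) * (((-1 : ℝ) ^ 0 / (((0 : ℕ).factorial : ℝ) *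
          ((0 + (n + 1)).factorial : ℝ))) * z ^ 0) = 0 := by
      have : (n.factorial : ℝ) ≠ 0 := by positivity
      simp only [zero_add, Nat.factorial_succ]
      push_cast
      field_simp
      simp
    rw [hz, zero_add]
    refine tsum_congr fun m => ?_
    rw [show m + 1 + n = m + n + 1 by ring, show m + 1 + (n + 1) = m + n + 1 + 1 by ring,
      show m + (n + 2) = m + n + 1 + 1 by ring, Nat.factorial_succ m,
      Nat.factorial_succ (m + n + 1)]
    have : (m.factorial : ℝ) ≠ 0 := by positivity
    have : ((m + n + 1).factorial : ℝ) ≠ 0 := by positivity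
    have : (m : ℝ) + n + 1 + 1 ≠ 0 := by positivity
    push_cast
    field_simp
    ring
  linarith

lemma besselJ_eq (n : ℕ) (s : ℝ) : besselJ n s = (s / 2) ^ n * besselE n ((s / 2) ^ 2) := by
  unfold besselJ besselE
  rw [← tsum_mul_left]
  refine tsum_congr fun m => ?_
  rw [pow_add, pow_mul]
  ring

/-- The classical recurrence `J_n(s) + J_{n+2}(s) = (2(n+1)/s) J_{n+1}(s)`. -/
lemma besselJ_rec (n : ℕ) {s : ℝ} (hs : s ≠ 0) :
    besselJ (n + 2) s = 2 * (n + 1) / s * besselJ (n + 1) s - besselJ n s := by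
  simp only [besselJ_eq]
  rw [besselE_rec n]
  field_simp
  ring

/-- The classical formula `J_n'(s) = (n/s) J_n(s) - J_{n+1}(s)`. -/
lemma besselJ_hasDerivAt (n : ℕ) {s : ℝ} (hs : s ≠ 0) :
    HasDerivAt (besselJ n) (n / s * besselJ n s - besselJ (n + 1) s) s := by
  have h2 : HasDerivAt (fun s : ℝ => s / 2) (1 / 2) s := (hasDerivAt_id s).div_const 2
  have hE :=
    HasDerivAt.comp s (besselE_hasDerivAt n ((s / 2) ^ 2)) (h2.fun_pow 2)
  have h := (h2.fun_pow n).mul hE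
  rw [show besselJ n = _ from funext (besselJ_eq n)]
  refine h.congr_deriv ?_
  simp only [besselJ_eq, Function.comp_apply]
  rcases n with _ | n
  · simp
    ring
  · rw [Nat.add_sub_cancel]
    push_cast
    field_simp
    ring

/-- The Bessel differential equation, solved for `J_n''`; in particular `J_n'` is differentiable
away from `0`. -/
lemma besselJ_deriv_hasDerivAt (n : ℕ) {s : ℝ} (hs : s ≠ 0) :
    HasDerivAt (deriv (besselJ n))
      (-(deriv (besselJ n) s) / s - (1 - (n : ℝ) ^ 2 / s ^ 2) * besselJ n s) s := by
  have hev : deriv (besselJ n) =ᶠ[nhds s]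
      fun s => n / s * besselJ n s - besselJ (n + 1) s := by
    filter_upwards [isOpen_ne.mem_nhds hs] with t ht using (besselJ_hasDerivAt n ht).deriv
  have h := (((hasDerivAt_const s (n : ℝ)).fun_div (hasDerivAt_id' s) hs).mul
    (besselJ_hasDerivAt n hs)).sub (besselJ_hasDerivAt (n + 1) hs)
  refine (HasDerivAt.congr_of_eventuallyEq h hev).congr_deriv ?_
  rw [(besselJ_hasDerivAt n hs).deriv, besselJ_rec n hs]
  push_cast
  field_simp
  ring

/-! ### Partial derivatives -/

/-- `u` is real-differentiable at `x` with partial derivatives `∂₁u = p` and `∂₂u = q`. -/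
def HasPD (u : ℝ × ℝ → ℂ) (p q : ℂ) (x : ℝ × ℝ) : Prop :=
  ∃ L : ℝ × ℝ →L[ℝ] ℂ, HasFDerivAt u L x ∧ L (1, 0) = p ∧ L (0, 1) = q

namespace HasPD

variable {u v : ℝ × ℝ → ℂ} {p q p' q' : ℂ} {x : ℝ × ℝ}

lemma pd1_eq (h : HasPD u p q x) : pd1 u x = p := by
  obtain ⟨L, hL, h1, -⟩ := h
  rw [pd1, hL.fderiv, h1]

lemma pd2_eq (h : HasPD u p q x) : pd2 u x = q := by
  obtain ⟨L, hL, -, h2⟩ := h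
  rw [pd2, hL.fderiv, h2]

lemma add (h : HasPD u p q x) (h' : HasPD v p' q' x) :
    HasPD (fun y => u y + v y) (p + p') (q + q') x := by
  obtain ⟨L, hL, rfl, rfl⟩ := h
  obtain ⟨M, hM, rfl, rfl⟩ := h'
  exact ⟨L + M, hL.fun_add hM, rfl, rfl⟩

lemma mul (h : HasPD u p q x) (h' : HasPD v p' q' x) :
    HasPD (fun y => u y * v y) (u x * p' + p * v x) (u x * q' + q * v x) x := by
  obtain ⟨L, hL, rfl, rfl⟩ := h
  obtain ⟨M, hM, rfl, rfl⟩ := h'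
  refine ⟨_, hL.fun_mul hM, ?_, ?_⟩ <;> simp [mul_comm]

lemma const (c : ℂ) : HasPD (fun _ => c) 0 0 x :=
  ⟨0, hasFDerivAt_const c x, rfl, rfl⟩

lemma congr (h : HasPD u p q x) (hu : v = u) (hp : p = p') (hq : q = q') :
    HasPD v p' q' x := by
  subst hu hp hq
  exact h

lemma ofReal {f : ℝ × ℝ → ℝ} {L : ℝ × ℝ →L[ℝ] ℝ} (h : HasFDerivAt f L x) :
    HasPD (fun y => (f y : ℂ)) (L (1, 0) : ℝ) (L (0, 1) : ℝ) x :=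
  ⟨Complex.ofRealCLM.comp L, Complex.ofRealCLM.hasFDerivAt.comp x h, rfl, rfl⟩

lemma fst : HasPD (fun y => (y.1 : ℂ)) 1 0 x :=
  (ofReal (hasFDerivAt_fst (p := x))).congr rfl (by simp) (by simp)

lemma snd : HasPD (fun y => (y.2 : ℂ)) 0 1 x :=
  (ofReal (hasFDerivAt_snd (p := x))).congr rfl (by simp) (by simp)

end HasPD

/-! ### Polar coordinates and the strain of a polar field -/

section

variable {x : ℝ × ℝ}

lemma r2_sq (x : ℝ × ℝ) : r2 x ^ 2 = x.1 ^ 2 + x.2 ^ 2 := Real.sq_sqrt (by positivity)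

lemma cos_sq_add_sin_sq (hx : 0 < r2 x) :
    ((x.1 / r2 x : ℝ) : ℂ) ^ 2 + ((x.2 / r2 x : ℝ) : ℂ) ^ 2 = 1 := by
  have h : (x.1 / r2 x) ^ 2 + (x.2 / r2 x) ^ 2 = 1 := by
    have := r2_sq x
    field_simp
    linarith
  exact_mod_cast h

/-- The gradient of a radial function `g(r)` is `g'(r) ν`. -/
lemma HasPD.radial {g : ℝ → ℝ} {g' : ℝ} (hx : 0 < r2 x) (hg : HasDerivAt g g' (r2 x)) :
    HasPD (fun y => (g (r2 y) : ℂ)) (g' * (x.1 / r2 x : ℝ)) (g' * (x.2 / r2 x : ℝ)) x := by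
  have h1 := HasFDerivAt.pow (hasFDerivAt_fst (𝕜 := ℝ) (p := x)) 2
  have h2 := HasFDerivAt.pow (hasFDerivAt_snd (𝕜 := ℝ) (p := x)) 2
  have h0 : x.1 ^ 2 + x.2 ^ 2 ≠ 0 := by
    rw [← r2_sq]
    positivity
  have hr : HasFDerivAt r2 _ x := (h1.add h2).sqrt h0
  have hs : Real.sqrt (x.1 ^ 2 + x.2 ^ 2) = r2 x := rfl
  refine (HasPD.ofReal (hg.comp_hasFDerivAt x hr)).congr rfl ?_ ?_ <;>
  · simp [hs]
    field_simp
    simp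

lemma HasPD.inv_r (hx : 0 < r2 x) :
    HasPD (fun y => ((r2 y)⁻¹ : ℂ)) (-(1 / r2 x ^ 2) * (x.1 / r2 x : ℝ))
      (-(1 / r2 x ^ 2) * (x.2 / r2 x : ℝ)) x :=
  (HasPD.radial hx (hasDerivAt_inv hx.ne')).congr (by simp) (by simp) (by simp)

lemma HasPD.cos (hx : 0 < r2 x) :
    HasPD (fun y => ((y.1 / r2 y : ℝ) : ℂ)) (((x.2 / r2 x : ℝ) : ℂ) ^ 2 / r2 x)
      (-(((x.1 / r2 x : ℝ) : ℂ) * (x.2 / r2 x : ℝ)) / r2 x) x := by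
  have h := cos_sq_add_sin_sq hx
  have hr : (r2 x : ℂ) ≠ 0 := by exact_mod_cast hx.ne'
  refine (HasPD.fst.mul (HasPD.inv_r hx)).congr ?_ ?_ ?_
  · ext y
    push_cast
    rfl
  · push_cast at h ⊢
    field_simp at h ⊢
    linear_combination -h
  · push_cast
    field_simp
    simp

lemma HasPD.sin (hx : 0 < r2 x) :
    HasPD (fun y => ((y.2 / r2 y : ℝ) : ℂ))
      (-(((x.1 / r2 x : ℝ) : ℂ) * (x.2 / r2 x : ℝ)) / r2 x)
      (((x.1 / r2 x : ℝ) : ℂ) ^ 2 / r2 x) x := by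
  have h := cos_sq_add_sin_sq hx
  have hr : (r2 x : ℂ) ≠ 0 := by exact_mod_cast hx.ne'
  refine (HasPD.snd.mul (HasPD.inv_r hx)).congr ?_ ?_ ?_
  · ext y
    push_cast
    rfl
  · push_cast
    field_simp
    simp
  · push_cast at h ⊢
    field_simp at h ⊢
    linear_combination -h

lemma wc_eq (x : ℝ × ℝ) :
    wc x = ((x.1 / r2 x : ℝ) : ℂ) + Complex.I * ((x.2 / r2 x : ℝ) : ℂ) := by
  rw [wc]
  push_cast
  ring

/-- `w^n = e^{inθ}` satisfies `∇(w^n) = (i n / r) w^n t`. -/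
lemma HasPD.wc_pow (hx : 0 < r2 x) (n : ℕ) :
    HasPD (fun y => wc y ^ n)
      (-(Complex.I * n * wc x ^ n * (x.2 / r2 x : ℝ) / r2 x))
      (Complex.I * n * wc x ^ n * (x.1 / r2 x : ℝ) / r2 x) x := by
  have hr : (r2 x : ℂ) ≠ 0 := by exact_mod_cast hx.ne'
  induction n with
  | zero => exact (HasPD.const 1).congr (by simp) (by simp) (by simp)
  | succ n ih =>
    have hw : HasPD wc (-(Complex.I * wc x * (x.2 / r2 x : ℝ) / r2 x))
        (Complex.I * wc x * (x.1 / r2 x : ℝ) / r2 x) x := by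
      refine ((HasPD.cos hx).add ((HasPD.const Complex.I).mul (HasPD.sin hx))).congr
        (funext wc_eq) ?_ ?_
      · rw [wc_eq x]
        linear_combination ((x.2 / r2 x : ℝ) : ℂ) ^ 2 / r2 x * Complex.I_sq
      · rw [wc_eq x]
        linear_combination
          (-((x.1 / r2 x : ℝ) : ℂ) * ((x.2 / r2 x : ℝ) : ℂ) / r2 x) * Complex.I_sq
    refine (ih.mul hw).congr (by ext y; rw [pow_succ]) ?_ ?_ <;>
    · push_cast
      ring

/-- The Cartesian components of the field `(α(r) ν + c β(r) t) e^{inθ}` and their first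
partial derivatives. Here `c` is a complex constant. -/
lemma HasPD.polar_field {α β : ℝ → ℝ} {α' β' : ℝ} (hx : 0 < r2 x) (n : ℕ) (c : ℂ)
    (hα : HasDerivAt α α' (r2 x)) (hβ : HasDerivAt β β' (r2 x)) :
    let C : ℂ := (x.1 / r2 x : ℝ)
    let S : ℂ := (x.2 / r2 x : ℝ)
    let N : ℂ := Complex.I * n
    let r : ℂ := r2 x
    let a : ℂ := α (r2 x)
    let b : ℂ := c * β (r2 x)
    let b' : ℂ := c * β'
    HasPD (fun y => (α (r2 y) : ℂ) * wc y ^ n * ((y.1 / r2 y : ℝ) : ℂ)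
        + c * (β (r2 y) : ℂ) * wc y ^ n * ((-y.2 / r2 y : ℝ) : ℂ))
      (wc x ^ n * (α' * C ^ 2 + (a + N * b) / r * S ^ 2 - (N * a / r + b' - b / r) * C * S))
      (wc x ^ n * ((α' - a / r) * C * S + N * a / r * C ^ 2 - b' * S ^ 2
        - N * b / r * C * S - b / r * C ^ 2)) x ∧
    HasPD (fun y => (α (r2 y) : ℂ) * wc y ^ n * ((y.2 / r2 y : ℝ) : ℂ)
        + c * (β (r2 y) : ℂ) * wc y ^ n * ((y.1 / r2 y : ℝ) : ℂ))
      (wc x ^ n * ((α' - a / r) * C * S - N * a / r * S ^ 2 + b' * C ^ 2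
        - N * b / r * C * S + b / r * S ^ 2))
      (wc x ^ n * (α' * S ^ 2 + (a + N * b) / r * C ^ 2 + (N * a / r + b' - b / r) * C * S)) x
    := by
  intro C S N r a b b'
  have hA := (HasPD.radial hx hα).mul (HasPD.wc_pow hx n)
  have hB := ((HasPD.const c).mul (HasPD.radial hx hβ)).mul (HasPD.wc_pow hx n)
  constructor
  · refine ((hA.mul (HasPD.cos hx)).add
      (hB.mul ((HasPD.const (-1)).mul (HasPD.sin hx)))).congr ?_ ?_ ?_
    · ext y
      push_cast
      ring
    · simp only [C, S, N, r, a, b, b']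
      ring
    · simp only [C, S, N, r, a, b, b']
      ring
  · refine ((hA.mul (HasPD.sin hx)).add (hB.mul (HasPD.cos hx))).congr rfl ?_ ?_
    · simp only [C, S, N, r, a, b, b']
      ring
    · simp only [C, S, N, r, a, b, b']
      ring

/-- Divergence and normal component of the symmetric gradient of `Q = (α(r) ν + c β(r) t) e^{inθ}`.
The last two identities say `(∇ˢQ) ν = (α' ν + ½ (i n α / r + b' - b / r) t) e^{inθ}` with
`b = c β`. -/
lemma polar_strain {α β : ℝ → ℝ} {α' β' : ℝ} (hx : 0 < r2 x) (n : ℕ) (c : ℂ)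
    (hα : HasDerivAt α α' (r2 x)) (hβ : HasDerivAt β β' (r2 x)) {Q1 Q2 : ℝ × ℝ → ℂ}
    (hQ1 : ∀ y, Q1 y = (α (r2 y) : ℂ) * wc y ^ n * ((y.1 / r2 y : ℝ) : ℂ)
        + c * (β (r2 y) : ℂ) * wc y ^ n * ((-y.2 / r2 y : ℝ) : ℂ))
    (hQ2 : ∀ y, Q2 y = (α (r2 y) : ℂ) * wc y ^ n * ((y.2 / r2 y : ℝ) : ℂ)
        + c * (β (r2 y) : ℂ) * wc y ^ n * ((y.1 / r2 y : ℝ) : ℂ)) :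
    let C : ℂ := (x.1 / r2 x : ℝ)
    let S : ℂ := (x.2 / r2 x : ℝ)
    let r : ℂ := r2 x
    let a : ℂ := α (r2 x)
    let b : ℂ := c * β (r2 x)
    let E : ℂ := (Complex.I * n * a / r + c * β' - b / r) / 2
    pd1 Q1 x + pd2 Q2 x = wc x ^ n * (α' + a / r + Complex.I * n * b / r) ∧
    pd1 Q1 x * C + (pd2 Q1 x + pd1 Q2 x) / 2 * S = wc x ^ n * (α' * C - E * S) ∧
    (pd2 Q1 x + pd1 Q2 x) / 2 * C + pd2 Q2 x * S = wc x ^ n * (α' * S + E * C) := by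
  intro C S r a b E
  have hCS : C ^ 2 + S ^ 2 = 1 := cos_sq_add_sin_sq hx
  obtain ⟨h1, h2⟩ := HasPD.polar_field hx n c hα hβ
  rw [← funext hQ1] at h1
  rw [← funext hQ2] at h2
  rw [h1.pd1_eq, h1.pd2_eq, h2.pd1_eq, h2.pd2_eq]
  refine ⟨?_, ?_, ?_⟩
  -- The Cartesian partial derivatives are homogeneous of degree 2 in `(C, S)`, so each
  -- left-hand side is the right-hand side times `C ^ 2 + S ^ 2 = 1`.
  · linear_combination wc x ^ n * (α' + a / r + Complex.I * n * b / r) * hCS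
  · linear_combination wc x ^ n * (α' * C - E * S) * hCS
  · linear_combination wc x ^ n * (α' * S + E * C) * hCS

end

/-! ### The traction of the s-wave field -/

/-- Traction of the s-wave field `Q_n^i` on the circle `|x| = R`:
`∂_ν Q = λ(∇·Q)ν + 2μ(∇ˢQ)ν = γ₁ e^{inθ}ν + γ₂ e^{inθ}t` with
`γ₁ = (4nμ/(k_s R²))(k_s R J_n'(k_s R) - J_n(k_s R))` and
`γ₂ = (2iμ/(k_s R²))((2n² - k_s²R²) J_n(k_s R) - 2 k_s R J_n'(k_s R))`. -/
theorem stmt12 (lam mu : ℝ) (hmu : 0 < mu) (ω R : ℝ) (hω : 0 < ω) (hR : 0 < R) (n : ℕ) :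
    let ks : ℝ := ω / Real.sqrt mu
    let Q : ℝ × ℝ → ℂ × ℂ := fun x =>
      ((2 * (n : ℂ) * (besselJ n (ks * r2 x) : ℂ) / ((ks * r2 x : ℝ) : ℂ))
           * wc x ^ n * ((x.1 / r2 x : ℝ) : ℂ)
         + (2 * Complex.I * ((deriv (besselJ n) (ks * r2 x) : ℝ) : ℂ))
             * wc x ^ n * ((-x.2 / r2 x : ℝ) : ℂ),
       (2 * (n : ℂ) * (besselJ n (ks * r2 x) : ℂ) / ((ks * r2 x : ℝ) : ℂ))
           * wc x ^ n * ((x.2 / r2 x : ℝ) : ℂ)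
         + (2 * Complex.I * ((deriv (besselJ n) (ks * r2 x) : ℝ) : ℂ))
             * wc x ^ n * ((x.1 / r2 x : ℝ) : ℂ))
    let Q1 : ℝ × ℝ → ℂ := fun x => (Q x).1
    let Q2 : ℝ × ℝ → ℂ := fun x => (Q x).2
    let divQ : ℝ × ℝ → ℂ := fun x => pd1 Q1 x + pd2 Q2 x
    let s12 : ℝ × ℝ → ℂ := fun x => (pd2 Q1 x + pd1 Q2 x) / 2
    let γ₁ : ℂ := ((4 * (n : ℝ) * mu / (ks * R ^ 2) : ℝ) : ℂ) *
      (((ks * R : ℝ) : ℂ) * ((deriv (besselJ n) (ks * R) : ℝ) : ℂ)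
        - ((besselJ n (ks * R) : ℝ) : ℂ))
    let γ₂ : ℂ := 2 * Complex.I * (mu : ℂ) / ((ks * R ^ 2 : ℝ) : ℂ) *
      (((2 * (n : ℝ) ^ 2 - ks ^ 2 * R ^ 2 : ℝ) : ℂ) * ((besselJ n (ks * R) : ℝ) : ℂ)
        - ((2 * ks * R : ℝ) : ℂ) * ((deriv (besselJ n) (ks * R) : ℝ) : ℂ))
    ∀ x : ℝ × ℝ, r2 x = R →
      ((lam : ℂ) * divQ x * ((x.1 / R : ℝ) : ℂ)
          + 2 * (mu : ℂ) * (pd1 Q1 x * ((x.1 / R : ℝ) : ℂ) + s12 x * ((x.2 / R : ℝ) : ℂ))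
        = γ₁ * wc x ^ n * ((x.1 / R : ℝ) : ℂ) + γ₂ * wc x ^ n * ((-x.2 / R : ℝ) : ℂ))
      ∧ ((lam : ℂ) * divQ x * ((x.2 / R : ℝ) : ℂ)
          + 2 * (mu : ℂ) * (s12 x * ((x.1 / R : ℝ) : ℂ) + pd2 Q2 x * ((x.2 / R : ℝ) : ℂ))
        = γ₁ * wc x ^ n * ((x.2 / R : ℝ) : ℂ) + γ₂ * wc x ^ n * ((x.1 / R : ℝ) : ℂ)) := by
  intro ks Q Q1 Q2 divQ s12 γ₁ γ₂ x hxR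
  subst hxR
  have hk : 0 < ks := div_pos hω (Real.sqrt_pos.2 hmu)
  have hkr : ks * r2 x ≠ 0 := (mul_pos hk hR).ne'
  have hlin : HasDerivAt (fun r : ℝ => ks * r) ks (r2 x) := by
    simpa using (hasDerivAt_id' (r2 x)).const_mul ks
  have hJ : HasDerivAt (fun r => besselJ n (ks * r)) (deriv (besselJ n) (ks * r2 x) * ks) (r2 x) :=
    HasDerivAt.comp (r2 x)
      (besselJ_hasDerivAt n hkr).differentiableAt.hasDerivAt hlin
  have hα := (hJ.const_mul (2 * (n : ℝ))).fun_div hlin hkr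
  have hβ : HasDerivAt (fun r => deriv (besselJ n) (ks * r)) _ (r2 x) :=
    HasDerivAt.comp (r2 x) (besselJ_deriv_hasDerivAt n hkr) hlin
  obtain ⟨hdiv, hν1, hν2⟩ := polar_strain (Q1 := Q1) (Q2 := Q2) hR n (2 * Complex.I) hα hβ
    (fun y => by simp only [Q1, Q]; push_cast; rfl) (fun y => by simp only [Q2, Q]; push_cast; rfl)
  have hkC : (ks : ℂ) ≠ 0 := by exact_mod_cast hk.ne'
  have hrC : (r2 x : ℂ) ≠ 0 := by exact_mod_cast hR.ne'
  have hI := Complex.I_sq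
  -- `Q` is a multiple of the curl of `J_n(k_s r) e^{inθ}`, hence divergence free.
  have hdiv0 : divQ x = 0 := by
    refine hdiv.trans (mul_eq_zero_of_right _ ?_)
    push_cast
    field_simp
    linear_combination (2 * (n : ℂ) * ((deriv (besselJ n) (ks * r2 x) : ℝ) : ℂ) * ks * r2 x) * hI
  have hx2 : ((-x.2 / r2 x : ℝ) : ℂ) = -((x.2 / r2 x : ℝ) : ℂ) := by
    push_cast
    ring
  simp only [s12, hdiv0, hx2]
  rw [hν1, hν2]
  generalize ((x.1 / r2 x : ℝ) : ℂ) = C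
  generalize ((x.2 / r2 x : ℝ) : ℂ) = S
  generalize wc x ^ n = W
  simp only [γ₁, γ₂]
  push_cast
  generalize (besselJ n (ks * r2 x) : ℂ) = J
  generalize ((deriv (besselJ n) (ks * r2 x) : ℝ) : ℂ) = J'
  constructor
  · field_simp
    ring
  · field_simp
    ring
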